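/- Let μ be the standard Gaussian measure on ℝⁿ, let Ω = {x ∈ ℝⁿ : g_j(x) ≥ 0, j = 1,…,m} be a basic closed semi-algebraic set (not necessarily compact), and let f ∈ ℝ[x] be a polynomial that vanishes on the topological boundary ∂Ω of Ω. For each i ∈ {1,…,n} and α ∈ ℕⁿ, define the polynomial p_{i,α}(x) = ∂(x^α f(x))/∂x_i − x_i · x^α f(x). Then ∫_Ω (∂/∂x_i)(x^α f(x) exp(−‖x‖²/2)) dx = 0, i.e., ∫_Ω p_{i,α} dμ = 0, for every α ∈ ℕⁿ and every i = 1,…,n. -/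

import Mathlib

open MeasureTheory MvPolynomial Filter Topology

noncomputable def gaussianMeasure (n : ℕ) : Measure (Fin n → ℝ) :=
  volume.withDensity fun x =>
    ENNReal.ofReal ((2 * Real.pi) ^ (-(n : ℝ) / 2) * Real.exp (-(∑ i, x i ^ 2) / 2))

noncomputable def expMeasure (n : ℕ) : Measure (Fin n → ℝ) :=
  (volume.restrict {x : Fin n → ℝ | ∀ i, 0 ≤ x i}).withDensity fun x =>
    ENNReal.ofReal (Real.exp (-(∑ i, x i)))

/-- degree |α| of a multi-index -/
def fdeg {n : ℕ} (α : Fin n →₀ ℕ) : ℕ := α.sum fun _ e => e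

/-- Riesz functional `L_u(p)` of a (pseudo-)moment sequence `u`. -/
noncomputable def riesz {n : ℕ} (u : (Fin n →₀ ℕ) → ℝ) (p : MvPolynomial (Fin n) ℝ) : ℝ :=
  ∑ α ∈ p.support, p.coeff α * u α

/-- Positive semidefiniteness of the moment matrix `M_d(u)`, expressed via its
quadratic form: `L_u(p²) ≥ 0` for all polynomials of degree at most `d`. -/
def MomPSD {n : ℕ} (d : ℕ) (u : (Fin n →₀ ℕ) → ℝ) : Prop :=
  ∀ p : MvPolynomial (Fin n) ℝ, p.totalDegree ≤ d → 0 ≤ riesz u (p ^ 2)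

/-- Positive semidefiniteness of the localizing matrix `M_k(g u)`, expressed via its
quadratic form: `L_u(g·p²) ≥ 0` for all polynomials of degree at most `k`. -/
def LocPSD {n : ℕ} (k : ℕ) (g : MvPolynomial (Fin n) ℝ) (u : (Fin n →₀ ℕ) → ℝ) : Prop :=
  ∀ p : MvPolynomial (Fin n) ℝ, p.totalDegree ≤ k → 0 ≤ riesz u (g * p ^ 2)

/-- moments of the standard Gaussian measure -/
noncomputable def gmom (n : ℕ) (α : Fin n →₀ ℕ) : ℝ :=
  ∫ x, (∏ i, x i ^ α i) ∂gaussianMeasure n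

/-- `d_j = ⌈deg g / 2⌉` -/
def dHalf {n : ℕ} (g : MvPolynomial (Fin n) ℝ) : ℕ := (g.totalDegree + 1) / 2

/-- the basic closed semi-algebraic set determined by the polynomials `g_j` -/
def semialg {n m : ℕ} (g : Fin m → MvPolynomial (Fin n) ℝ) : Set (Fin n → ℝ) :=
  {x | ∀ j, 0 ≤ eval x (g j)}

/-- feasibility for the primal semidefinite relaxation of order `d` (Gaussian measure) -/
def Feasible {n m : ℕ} (g : Fin m → MvPolynomial (Fin n) ℝ) (d : ℕ)
    (u v : (Fin n →₀ ℕ) → ℝ) : Prop :=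
  (∀ α : Fin n →₀ ℕ, fdeg α ≤ 2 * d → u α + v α = gmom n α) ∧
  MomPSD d u ∧ MomPSD d v ∧ ∀ j, LocPSD (d - dHalf (g j)) (g j) u

/-- the value `ō_d(f)` of the primal semidefinite relaxation of order `d` -/
noncomputable def obar {n m : ℕ} (g : Fin m → MvPolynomial (Fin n) ℝ) (d : ℕ)
    (f : MvPolynomial (Fin n) ℝ) : ℝ :=
  sSup {r | ∃ u v, Feasible g d u v ∧ r = riesz u f}

/-- the Stokes polynomial `p_{i,α} = ∂(x^α f)/∂x_i − x_i · x^α f` (Gaussian case) -/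
noncomputable def pStokesG {n : ℕ} (f : MvPolynomial (Fin n) ℝ) (i : Fin n) (α : Fin n →₀ ℕ) :
    MvPolynomial (Fin n) ℝ :=
  pderiv i (monomial α 1 * f) - X i * (monomial α 1 * f)

/-- the Stokes polynomial `p_{i,α} = ∂(x^α f)/∂x_i − x^α f` (exponential case) -/
noncomputable def pStokesE {n : ℕ} (f : MvPolynomial (Fin n) ℝ) (i : Fin n) (α : Fin n →₀ ℕ) :
    MvPolynomial (Fin n) ℝ :=
  pderiv i (monomial α 1 * f) - monomial α 1 * f

/-- feasibility for the Stokes-augmented semidefinite relaxation of order `d` -/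
def FeasibleS {n m : ℕ} (g : Fin m → MvPolynomial (Fin n) ℝ) (f : MvPolynomial (Fin n) ℝ)
    (d : ℕ) (u v : (Fin n →₀ ℕ) → ℝ) : Prop :=
  Feasible g d u v ∧
  ∀ (i : Fin n) (α : Fin n →₀ ℕ), (pStokesG f i α).totalDegree ≤ 2 * d →
    riesz u (pStokesG f i α) = 0

/-- the value `ω̄_d` of the Stokes-augmented semidefinite relaxation of order `d` -/
noncomputable def omegabar {n m : ℕ} (g : Fin m → MvPolynomial (Fin n) ℝ)
    (f : MvPolynomial (Fin n) ℝ) (d : ℕ) : ℝ :=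
  sSup {r | ∃ u v, FeasibleS g f d u v ∧ r = u 0}

/-- `p ∈ Σ[x]_d`: `p` is a sum of squares of polynomials of degree at most `d` -/
def IsSOS {n : ℕ} (d : ℕ) (p : MvPolynomial (Fin n) ℝ) : Prop :=
  ∃ (k : ℕ) (q : Fin k → MvPolynomial (Fin n) ℝ),
    (∀ i, (q i).totalDegree ≤ d) ∧ p = ∑ i, q i ^ 2

/-- membership in the truncated quadratic module `Q_{2d}(Ω)` -/
def InQM {n m : ℕ} (g : Fin m → MvPolynomial (Fin n) ℝ) (d : ℕ)
    (p : MvPolynomial (Fin n) ℝ) : Prop :=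
  ∃ (σ₀ : MvPolynomial (Fin n) ℝ) (σ : Fin m → MvPolynomial (Fin n) ℝ),
    IsSOS d σ₀ ∧ (∀ j, IsSOS (d - dHalf (g j)) (σ j)) ∧ p = σ₀ + ∑ j, σ j * g j

/-!
The function `h = 1_Ω · F`, with `F = x^α f e^{-‖x‖²/2}`, is continuous because `F` vanishes on
`∂Ω`. Along any line, a zero of `F` with nonzero derivative is isolated, so there are only
countably many of them; at every other point `h` is differentiable with derivative `1_Ω · ∂ᵢF`,
and the fundamental theorem of calculus applies to `h` on the segment `[x, x + eᵢ]`. Integrating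
over `x`, the increments `h (x + eᵢ) - h x` contribute zero by translation invariance of Lebesgue
measure, while the average over `t ∈ [0, 1]` of the translates of `1_Ω · ∂ᵢF` by `t eᵢ`
contributes `∫_Ω ∂ᵢF`.
-/

section LineCalculus

variable {𝕜 G : Type*} [NontriviallyNormedField 𝕜] [NormedAddCommGroup G] [NormedSpace 𝕜 G]

theorem countable_setOf_eq_and_deriv_ne_zero [SecondCountableTopology 𝕜] {f f' : 𝕜 → G}
    (hf : ∀ t, HasDerivAt f (f' t) t) (c : G) : {t | f t = c ∧ f' t ≠ 0}.Countable := by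
  refine (HereditarilyLindelofSpace.isLindelof _).countable
    (discreteTopology_subtype_iff.2 fun t ht => ?_)
  rw [← disjoint_iff, disjoint_principal_right]
  filter_upwards [(hf t).eventually_ne (c := c) ht.2] with s hs hmem
  exact hs hmem.1

theorem hasDerivAt_indicator {f f' : 𝕜 → G} {S : Set 𝕜} {t : 𝕜} (hf : HasDerivAt f (f' t) t)
    (hfrontier : t ∈ frontier S → f t = 0 ∧ f' t = 0) :
    HasDerivAt (S.indicator f) (S.indicator f' t) t := by
  by_cases hin : t ∈ interior S
  · have heq : S.indicator f =ᶠ[𝓝 t] f :=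
      (Set.eqOn_indicator (f := f)).eventuallyEq_of_mem (mem_interior_iff_mem_nhds.1 hin)
    rw [Set.indicator_of_mem (interior_subset hin)]
    exact hf.congr_of_eventuallyEq heq
  by_cases hcl : t ∈ closure S
  · obtain ⟨hft, hf't⟩ := hfrontier ⟨hcl, hin⟩
    have hbound : (fun s => S.indicator f s) =O[𝓝 t] f :=
      Asymptotics.isBigO_of_le _ fun s => norm_indicator_le_norm_self f s
    rw [hf't, hasDerivAt_iff_isLittleO] at hf
    rw [Set.indicator_apply_eq_zero.2 fun _ => hf't, hasDerivAt_iff_isLittleO,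
      Set.indicator_apply_eq_zero.2 fun _ => hft]
    simp only [hft, smul_zero, sub_zero] at hf ⊢
    exact hbound.trans_isLittleO hf
  · have heq : S.indicator f =ᶠ[𝓝 t] 0 :=
      (Set.eqOn_indicator' (f := f)).eventuallyEq_of_mem
        (mem_of_superset (isClosed_closure.isOpen_compl.mem_nhds hcl)
          (Set.compl_subset_compl.2 subset_closure))
    rw [Set.indicator_of_notMem fun h => hcl (subset_closure h)]
    exact (hasDerivAt_const t 0).congr_of_eventuallyEq heq

theorem hasDerivAt_comp_line {E : Type*} [AddCommGroup E] [Module 𝕜 E] {F F' : E → G}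
    {v : E} (hF : ∀ x, HasLineDerivAt 𝕜 F (F' x) x v) (x : E) (t : 𝕜) :
    HasDerivAt (fun s => F (x + s • v)) (F' (x + t • v)) t := by
  have hline : HasDerivAt (fun s => F (x + t • v + s • v)) (F' (x + t • v)) (t - t) := by
    rw [sub_self]
    exact hF (x + t • v)
  refine (hline.comp_sub_const t t).congr_of_eventuallyEq (.of_forall fun s => ?_)
  simp only [add_assoc, ← add_smul, add_sub_cancel]

end LineCalculus

section Stokes

variable {E G : Type*} [NormedAddCommGroup G] [NormedSpace ℝ G]

theorem intervalIntegral_indicator_eq_sub_of_hasDerivAt [CompleteSpace G] {f f' : ℝ → G}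
    {S : Set ℝ} {a b : ℝ} (hf : ∀ t, HasDerivAt f (f' t) t) (hfrontier : ∀ t ∈ frontier S, f t = 0)
    (hint : IntervalIntegrable (S.indicator f') volume a b) :
    ∫ t in a..b, S.indicator f' t = S.indicator f b - S.indicator f a := by
  have hcont : Continuous (S.indicator f) :=
    continuous_indicator hfrontier fun t _ => (hf t).continuousAt.continuousWithinAt
  refine integral_eq_of_hasDerivAt_off_countable _ _
    (countable_setOf_eq_and_deriv_ne_zero hf 0) hcont.continuousOn (fun t ht => ?_) hint
  refine hasDerivAt_indicator (hf t) fun htS => ⟨hfrontier t htS, ?_⟩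
  by_contra hne
  exact ht.2 ⟨hfrontier t htS, hne⟩

variable [NormedAddCommGroup E] [NormedSpace ℝ E]

theorem intervalIntegral_indicator_comp_line_eq_sub [CompleteSpace G] {F F' : E → G} {S : Set E}
    {v x : E} {a b : ℝ} (hF : ∀ x, HasLineDerivAt ℝ F (F' x) x v)
    (hfrontier : ∀ x ∈ frontier S, F x = 0)
    (hint : IntervalIntegrable (fun t => S.indicator F' (x + t • v)) volume a b) :
    ∫ t in a..b, S.indicator F' (x + t • v) =
      S.indicator F (x + b • v) - S.indicator F (x + a • v) := by
  have hline : Continuous fun t : ℝ => x + t • v := by fun_prop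
  exact intervalIntegral_indicator_eq_sub_of_hasDerivAt (S := (fun t : ℝ => x + t • v) ⁻¹' S)
    (hasDerivAt_comp_line hF x) (fun t ht => hfrontier _ (hline.frontier_preimage_subset S ht)) hint

variable [MeasurableSpace E] [BorelSpace E] [SecondCountableTopology E]
  {μ : Measure E} [SFinite μ] [μ.IsAddRightInvariant]

theorem measurePreserving_add_smul (ν : Measure ℝ) [IsProbabilityMeasure ν] (v : E) :
    MeasurePreserving (fun p : ℝ × E => p.2 + p.1 • v) (ν.prod μ) μ :=
  measurePreserving_snd.comp <| (MeasurePreserving.id ν).skew_product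
    (g := fun t x => x + t • v) (by fun_prop) (.of_forall fun t => map_add_right_eq_self μ (t • v))

theorem setIntegral_eq_zero_of_hasLineDerivAt [CompleteSpace G] {F F' : E → G} {S : Set E} {v : E}
    (hS : MeasurableSet S) (hF : ∀ x, HasLineDerivAt ℝ F (F' x) x v)
    (hfrontier : ∀ x ∈ frontier S, F x = 0) (hFint : IntegrableOn F S μ)
    (hF'int : IntegrableOn F' S μ) : ∫ x in S, F' x ∂μ = 0 := by
  set ν : Measure ℝ := volume.restrict (Set.Ioc 0 1)
  have : IsProbabilityMeasure ν := ⟨by simp [ν]⟩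
  have hshear := measurePreserving_add_smul (μ := μ) ν v
  have hind : Integrable (S.indicator F) μ := hFint.integrable_indicator hS
  have hind' : Integrable (S.indicator F') μ := hF'int.integrable_indicator hS
  have hprod : Integrable (fun p : ℝ × E => S.indicator F' (p.2 + p.1 • v)) (ν.prod μ) :=
    hshear.integrable_comp_of_integrable hind'
  have hincrement : ∀ᵐ x ∂μ,
      ∫ t, S.indicator F' (x + t • v) ∂ν = S.indicator F (x + v) - S.indicator F x := by
    filter_upwards [hprod.prod_left_ae] with x hx
    have hFTC := intervalIntegral_indicator_comp_line_eq_sub hF hfrontier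
      ((intervalIntegrable_iff_integrableOn_Ioc_of_le zero_le_one).2 hx)
    rwa [intervalIntegral.integral_of_le zero_le_one, one_smul, zero_smul, add_zero] at hFTC
  calc ∫ x in S, F' x ∂μ
      = ∫ x, S.indicator F' x ∂μ := (integral_indicator hS).symm
    _ = ∫ p : ℝ × E, S.indicator F' (p.2 + p.1 • v) ∂ν.prod μ := by
      rw [← integral_map hshear.aemeasurable (by rw [hshear.map_eq]; exact hind'.1), hshear.map_eq]
    _ = ∫ x, ∫ t, S.indicator F' (x + t • v) ∂ν ∂μ := integral_prod_symm _ hprod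
    _ = ∫ x, (S.indicator F (x + v) - S.indicator F x) ∂μ := integral_congr_ae hincrement
    _ = 0 := by
      rw [integral_sub (hind.comp_add_right v) hind, integral_add_right_eq_self, sub_self]

end Stokes

section Gaussian

theorem hasFDerivAt_eval {𝕜 ι : Type*} [NontriviallyNormedField 𝕜] [Fintype ι]
    (p : MvPolynomial ι 𝕜) (x : ι → 𝕜) :
    HasFDerivAt (𝕜 := 𝕜) (fun y : ι → 𝕜 => eval y p)
      (∑ i, eval x (pderiv i p) • (ContinuousLinearMap.proj i : (ι → 𝕜) →L[𝕜] 𝕜)) x := by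
  classical
  induction p using MvPolynomial.induction_on with
  | C a =>
    simp only [eval_C]
    exact (hasFDerivAt_const (𝕜 := 𝕜) a x).congr_fderiv (by ext; simp)
  | add p q hp hq =>
    simp only [map_add]
    exact (hp.fun_add hq).congr_fderiv (by ext; simp [add_mul, Finset.sum_add_distrib])
  | mul_X p j hp =>
    simp only [map_mul, eval_X]
    refine (hp.fun_mul (hasFDerivAt_apply j x)).congr_fderiv ?_
    ext v
    simp [pderiv_X, Pi.single_apply, apply_ite, add_mul, Finset.sum_add_distrib,
      Finset.mul_sum, mul_assoc]

variable {ι : Type*} [Fintype ι]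

/-- The unnormalised density `e^{-‖x‖²/2}` of the standard Gaussian measure, with the Euclidean norm
written out because `ι → ℝ` carries the sup norm. -/
noncomputable def gaussianWeight (x : ι → ℝ) : ℝ :=
  Real.exp (-(∑ j, x j ^ 2) / 2)

theorem hasFDerivAt_gaussianWeight (x : ι → ℝ) :
    HasFDerivAt gaussianWeight
      (gaussianWeight x • -∑ i, x i • (ContinuousLinearMap.proj i : (ι → ℝ) →L[ℝ] ℝ)) x := by
  have hsq : HasFDerivAt (fun y : ι → ℝ => ∑ j, y j ^ 2)
      (∑ j, (2 * x j) • (ContinuousLinearMap.proj j : (ι → ℝ) →L[ℝ] ℝ)) x :=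
    HasFDerivAt.fun_sum fun j _ => by simpa using (hasFDerivAt_apply (𝕜 := ℝ) j x).pow 2
  have hexponent : HasFDerivAt (fun y : ι → ℝ => -(∑ j, y j ^ 2) / 2)
      (-∑ i, x i • (ContinuousLinearMap.proj i : (ι → ℝ) →L[ℝ] ℝ)) x := by
    simp only [div_eq_mul_inv]
    refine (hsq.fun_neg.mul_const 2⁻¹).congr_fderiv ?_
    ext v
    simp [Finset.mul_sum, mul_assoc]
  exact hexponent.exp

theorem differentiable_eval_mul_gaussianWeight (p : MvPolynomial ι ℝ) :
    Differentiable ℝ fun y => eval y p * gaussianWeight y := fun x =>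
  ((hasFDerivAt_eval p x).fun_mul (hasFDerivAt_gaussianWeight x)).differentiableAt

theorem fderiv_eval_mul_gaussianWeight_single [DecidableEq ι] (p : MvPolynomial ι ℝ) (x : ι → ℝ)
    (i : ι) :
    fderiv ℝ (fun y => eval y p * gaussianWeight y) x (Pi.single i 1) =
      eval x (pderiv i p - X i * p) * gaussianWeight x := by
  rw [((hasFDerivAt_eval p x).fun_mul (hasFDerivAt_gaussianWeight x)).fderiv]
  simp only [smul_neg, add_apply, neg_apply, smul_apply, sum_apply, ContinuousLinearMap.proj_apply,
    Pi.single_apply, smul_eq_mul, mul_ite, mul_one, mul_zero, Finset.sum_ite_eq', Finset.mem_univ,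
    if_true, map_sub, map_mul, eval_X]
  ring

theorem integrable_pow_mul_exp_neg_sq_div_two (k : ℕ) :
    Integrable fun t : ℝ => t ^ k * Real.exp (-t ^ 2 / 2) := by
  have hk : (-1 : ℝ) < k := neg_one_lt_zero.trans_le k.cast_nonneg
  convert integrable_rpow_mul_exp_neg_mul_sq one_half_pos hk using 2 with t
  rw [Real.rpow_natCast]
  ring_nf

theorem integrable_eval_mul_gaussianWeight (p : MvPolynomial ι ℝ) :
    Integrable fun y => eval y p * gaussianWeight y := by
  induction p using MvPolynomial.induction_on' with
  | add p q hp hq =>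
    simp only [map_add, add_mul]
    exact hp.add hq
  | monomial α a =>
    have hprod : Integrable fun y : ι → ℝ => ∏ i, y i ^ α i * Real.exp (-y i ^ 2 / 2) :=
      Integrable.fintype_prod fun i => integrable_pow_mul_exp_neg_sq_div_two (α i)
    refine (hprod.const_mul a).congr (.of_forall fun y => ?_)
    simp only [eval_monomial, Finsupp.prod_pow, Finset.prod_mul_distrib, ← Real.exp_sum,
      ← Finset.sum_div, Finset.sum_neg_distrib, gaussianWeight, mul_assoc]

theorem setIntegral_fderiv_eval_mul_gaussianWeight_eq_zero [DecidableEq ι] {S : Set (ι → ℝ)}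
    (hS : MeasurableSet S) {p : MvPolynomial ι ℝ} (hp : ∀ x ∈ frontier S, eval x p = 0) (i : ι) :
    ∫ x in S, fderiv ℝ (fun y => eval y p * gaussianWeight y) x (Pi.single i 1) = 0 := by
  refine setIntegral_eq_zero_of_hasLineDerivAt hS
    (fun x => (differentiable_eval_mul_gaussianWeight p x).hasFDerivAt.hasLineDerivAt _)
    (fun x hx => by rw [hp x hx, zero_mul])
    (integrable_eval_mul_gaussianWeight p).integrableOn ?_
  simp only [fderiv_eval_mul_gaussianWeight_single]
  exact (integrable_eval_mul_gaussianWeight _).integrableOn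

theorem setIntegral_gaussianMeasure {n : ℕ} {S : Set (Fin n → ℝ)} (hS : MeasurableSet S)
    (φ : (Fin n → ℝ) → ℝ) :
    ∫ x in S, φ x ∂gaussianMeasure n =
      (2 * Real.pi) ^ (-(n : ℝ) / 2) * ∫ x in S, φ x * gaussianWeight x := by
  rw [gaussianMeasure, setIntegral_withDensity_eq_setIntegral_toReal_smul (by fun_prop)
    (.of_forall fun _ => ENNReal.ofReal_lt_top) _ hS, ← integral_const_mul]
  refine integral_congr_ae (.of_forall fun x => ?_)
  dsimp only
  rw [ENNReal.toReal_ofReal (by positivity), smul_eq_mul, gaussianWeight]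
  ring

end Gaussian

theorem measurableSet_semialg {n m : ℕ} (g : Fin m → MvPolynomial (Fin n) ℝ) :
    MeasurableSet (semialg g) := by
  rw [semialg, Set.ofPred_forall]
  exact .iInter fun j => measurableSet_le measurable_const (continuous_eval (g j)).measurable

theorem stmt13_general {n : ℕ} {S : Set (Fin n → ℝ)} (hS : MeasurableSet S)
    (f : MvPolynomial (Fin n) ℝ) (hfb : ∀ x ∈ frontier S, eval x f = 0)
    (i : Fin n) (α : Fin n →₀ ℕ) :
    (∫ x in S,
        fderiv ℝ (fun y : Fin n → ℝ =>
          eval y (monomial α (1 : ℝ) * f) * Real.exp (-(∑ j, y j ^ 2) / 2)) x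
          (Pi.single i 1) ∂volume) = 0 ∧
    (∫ x in S, eval x (pStokesG f i α) ∂gaussianMeasure n) = 0 := by
  have hvanish : ∀ x ∈ frontier S, eval x (monomial α 1 * f) = 0 := fun x hx => by
    rw [map_mul, hfb x hx, mul_zero]
  have hstokes := setIntegral_fderiv_eval_mul_gaussianWeight_eq_zero hS hvanish i
  refine ⟨hstokes, ?_⟩
  simp only [fderiv_eval_mul_gaussianWeight_single] at hstokes
  rw [setIntegral_gaussianMeasure hS, pStokesG, hstokes, mul_zero]

/-- Stokes identity for the Gaussian measure on a (possibly non-compact)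
basic closed semi-algebraic set `Ω`: if `f` vanishes on `∂Ω` then, for every multi-index `α`
and coordinate `i`, `∫_Ω ∂/∂x_i (x^α f(x) e^{−‖x‖²/2}) dx = 0`, i.e. `∫_Ω p_{i,α} dμ = 0`
where `p_{i,α} = ∂(x^α f)/∂x_i − x_i x^α f`. -/
theorem stmt13 {n m : ℕ} (g : Fin m → MvPolynomial (Fin n) ℝ)
    (f : MvPolynomial (Fin n) ℝ)
    (hfb : ∀ x ∈ frontier (semialg g), eval x f = 0)
    (i : Fin n) (α : Fin n →₀ ℕ) :
    (∫ x in semialg g,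
        fderiv ℝ (fun y : Fin n → ℝ =>
          eval y (monomial α (1 : ℝ) * f) * Real.exp (-(∑ j, y j ^ 2) / 2)) x
          (Pi.single i 1) ∂volume) = 0 ∧
    (∫ x in semialg g, eval x (pStokesG f i α) ∂gaussianMeasure n) = 0 :=
  stmt13_general (measurableSet_semialg g) f hfb i α
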